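/- Assume q ≡ 1 (mod 4). Let p and r be distinct internal points such that the line through p and r is a passant. Then |H_{p,r} ∩ C| is even for each of the following class sets C: C = {1}; C = [4]; C = [θ] for any nonzero square θ ≠ 4 with θ-4 a nonzero square; C = [π] for any nonzero square π ≠ 4 with π-4 a nonsquare. -/

import Mathlib

/-!
Let `ℓ` be the passant line `pr` and `τ` the involutory homology with axis `ℓ` and centre the
pole of `ℓ`. It fixes `p` and `r`, preserves the quadratic form, and normalises `H`. Hence
`M ↦ τ M τ` is an involution of `H_{p,r} ∩ C` for each of the class sets `C` (`even_inter`).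

It has no fixed points. If `M` commutes with `τ`, then `w = r M⁻¹` is fixed by `τ`, so it lies on
`ℓ`; moreover `Q(w) = Q(r)` is a nonsquare and `w` is conjugate to `p`. The discriminant of `ℓ` is
then, up to nonzero squares, `B(p,w)^2 - 4 Q(p) Q(w) = -4 Q(p) Q(w)`, which is a square because
`-1` and the product of two nonsquares are squares. This contradicts `ℓ` being a passant
(`conjugate_internal_false`).
-/

open scoped Classical

noncomputable section

namespace ConicPaper

variable (K : Type) [Field K] [Fintype K]

/-- Points (and also lines, via homogeneous coordinates) of `PG(2,q)`. -/
abbrev Pt := Projectivization K (Fin 3 → K)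

instance : Fintype (Pt K) := @Fintype.ofFinite _ (Quotient.finite _)

/-- `a` is a nonsquare in `K`. -/
def Nonsq (a : K) : Prop := ¬ IsSquare a

/-- The quadratic form `Q(x0,x1,x2) = x1^2 - x0*x2` defining the conic. -/
def Qf (v : Fin 3 → K) : K := v 1 ^ 2 - v 0 * v 2

/-- A point is internal when `Q` of (a representative of) it is a nonsquare. -/
def Internal (p : Pt K) : Prop := Nonsq K (Qf K p.rep)

/-- A point is external when `Q` of it is a nonzero square. -/
def External (p : Pt K) : Prop := Qf K p.rep ≠ 0 ∧ IsSquare (Qf K p.rep)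

/-- The point `p` lies on the line `ℓ = [b0,b1,b2]`. -/
def OnL (p ℓ : Pt K) : Prop :=
  p.rep 0 * ℓ.rep 0 + p.rep 1 * ℓ.rep 1 + p.rep 2 * ℓ.rep 2 = 0

/-- Discriminant `b1^2 - 4 b0 b2` of a line. -/
def lineDisc (ℓ : Pt K) : K := ℓ.rep 1 ^ 2 - 4 * ℓ.rep 0 * ℓ.rep 2

/-- A line is a passant when its discriminant is a nonsquare. -/
def Passant (ℓ : Pt K) : Prop := Nonsq K (lineDisc K ℓ)

/-- A line is a secant when its discriminant is a nonzero square. -/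
def Secant (ℓ : Pt K) : Prop := lineDisc K ℓ ≠ 0 ∧ IsSquare (lineDisc K ℓ)

/-- The incidence pairing of the vector `w` with the polar line
`p^⊥ = [z, -2y, x]` of the point `p = (x,y,z)`. -/
def perpDot (p : Pt K) (w : Fin 3 → K) : K :=
  w 0 * p.rep 2 + w 1 * (-2 * p.rep 1) + w 2 * p.rep 0

/-- The point `r` lies on the passant line `p^⊥`. -/
def OnPerp (p r : Pt K) : Prop := perpDot K p r.rep = 0

/-- The (finite) set `I` of internal points, as a type. -/
abbrev Ipts := {p : Pt K // Internal K p}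

instance : Fintype (Ipts K) := Fintype.ofFinite _

/-- The line through `p` and `r` is a passant. -/
def PassantThru (p r : Pt K) : Prop := ∃ ℓ, OnL K p ℓ ∧ OnL K r ℓ ∧ Passant K ℓ

/-- The line through `p` and `r` is a secant. -/
def SecantThru (p r : Pt K) : Prop := ∃ ℓ, OnL K p ℓ ∧ OnL K r ℓ ∧ Secant K ℓ

/-- The action of a (nonsingular) matrix `M` on points of `PG(2,q)`:
`p ↦ p·M`.  (If `p.rep ᵥ* M` were zero -- impossible for invertible `M` --
we return `p`, making the function total.) -/
def actPt (M : Matrix (Fin 3) (Fin 3) K) (p : Pt K) : Pt K :=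
  if h : Matrix.vecMul p.rep M ≠ 0 then Projectivization.mk K (Matrix.vecMul p.rep M) h else p

/-- The group `H ≅ PSL(2,q)`, given by its set of matrix representatives. -/
def Hset : Set (Matrix (Fin 3) (Fin 3) K) :=
  {M | ∃ a b c d : K, a * d - b * c = 1 ∧
    M = !![a^2, a*b, b^2; 2*a*c, a*d + b*c, 2*b*d; c^2, c*d, d^2]}

/-- The class set `{g ∈ H : T(g) = tr(g) + 1 = s}` for `s ∈ F_q`. -/
def classOf (s : K) : Set (Matrix (Fin 3) (Fin 3) K) :=
  {g | g ∈ Hset K ∧ Matrix.trace g + 1 = s}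

/-- The class set `[4] = {g ∈ H : T(g) = 4, g ≠ 1}`. -/
def class4 : Set (Matrix (Fin 3) (Fin 3) K) :=
  {g | g ∈ Hset K ∧ Matrix.trace g + 1 = 4 ∧ g ≠ 1}

/-- `H_{p,r} = {h ∈ H : r lies on the line (p^⊥)^h}`; the line `(p^⊥)^h` has
coordinate vector `h⁻¹ ⬝ (p^⊥)`, so `r` lies on it iff
`perpDot p (r.rep ᵥ* h⁻¹) = 0`. -/
def HprSet (p r : Pt K) : Set (Matrix (Fin 3) (Fin 3) K) :=
  {M | M ∈ Hset K ∧ perpDot K p (Matrix.vecMul r.rep M⁻¹) = 0}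

/-! ### A passant line carries no pair of conjugate internal points -/

lemma two_ne_zero_of_card (h1 : Fintype.card K % 4 = 1) : (2 : K) ≠ 0 := by
  apply Ring.two_ne_zero
  intro h
  have := FiniteField.even_card_iff_char_two.mp h
  omega

lemma isSquare_mul_of_nonsq {a b : K} (ha : Nonsq K a) (hb : Nonsq K b) :
    IsSquare (a * b) := by
  have ha0 : a ≠ 0 := by rintro rfl; exact ha (IsSquare.zero)
  have hb0 : b ≠ 0 := by rintro rfl; exact hb (IsSquare.zero)
  have h1 := quadraticChar_neg_one_iff_not_isSquare.mpr ha
  have h2 := quadraticChar_neg_one_iff_not_isSquare.mpr hb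
  apply (quadraticChar_one_iff_isSquare (mul_ne_zero ha0 hb0)).mp
  rw [map_mul, h1, h2]
  norm_num

/-- For vectors `u`, `w` on the line `b`, both with nonsquare `Q`, orthogonality forces the
discriminant of `b` to be a square: `b` is proportional to `u × w`, whose discriminant is
`B(u,w)^2 - 4 Q(u) Q(w)`, and `-1` is a square. -/
lemma conjugate_internal_false (h1 : Fintype.card K % 4 = 1) (u w b : Fin 3 → K)
    (hu : Nonsq K (Qf K u)) (hw : Nonsq K (Qf K w))
    (hub : u 0 * b 0 + u 1 * b 1 + u 2 * b 2 = 0)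
    (hwb : w 0 * b 0 + w 1 * b 1 + w 2 * b 2 = 0)
    (hD : Nonsq K (b 1 ^ 2 - 4 * b 0 * b 2))
    (horth : w 0 * u 2 + w 1 * (-2 * u 1) + w 2 * u 0 = 0) : False := by
  have h2 := two_ne_zero_of_card K h1
  obtain ⟨s, hs⟩ := isSquare_mul_of_nonsq K hu hw
  obtain ⟨i, hi⟩ : IsSquare (-1 : K) := FiniteField.isSquare_neg_one_iff.mpr (by omega)
  have hs0 : s ≠ 0 := by
    rintro rfl
    rcases mul_eq_zero.mp (hs.trans (mul_zero 0)) with h | h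
    · exact hu (h ▸ IsSquare.zero)
    · exact hw (h ▸ IsSquare.zero)
  have hi0 : i ≠ 0 := by
    rintro rfl
    simp at hi
  simp only [Qf] at hs
  -- the coordinates of `c = u × w`
  obtain ⟨c0, hc0⟩ : ∃ c, c = u 1 * w 2 - u 2 * w 1 := ⟨_, rfl⟩
  obtain ⟨c1, hc1⟩ : ∃ c, c = u 2 * w 0 - u 0 * w 2 := ⟨_, rfl⟩
  obtain ⟨c2, hc2⟩ : ∃ c, c = u 0 * w 1 - u 1 * w 0 := ⟨_, rfl⟩
  have hdisc : c1 ^ 2 - 4 * c0 * c2 = (2 * i * s) ^ 2 := by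
    have : (2 * i * s) ^ 2 = -4 * (s * s) := by linear_combination (-4 * s ^ 2) * hi
    rw [this, ← hs, hc0, hc1, hc2]
    linear_combination (w 0 * u 2 + w 1 * (-2 * u 1) + w 2 * u 0) * horth
  have hne : 2 * i * s ≠ 0 := mul_ne_zero (mul_ne_zero h2 hi0) hs0
  have e01 : c0 * b 1 = c1 * b 0 := by
    rw [hc0, hc1]; linear_combination w 2 * hub - u 2 * hwb
  have e12 : c1 * b 2 = c2 * b 1 := by
    rw [hc1, hc2]; linear_combination w 0 * hub - u 0 * hwb
  have e02 : c0 * b 2 = c2 * b 0 := by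
    rw [hc0, hc2]; linear_combination u 1 * hwb - w 1 * hub
  have key : ∀ x y : K, x ≠ 0 →
      (2 * i * s) ^ 2 * x ^ 2 = y ^ 2 * (b 1 ^ 2 - 4 * b 0 * b 2) → False := by
    intro x y hx h
    have hy : y ≠ 0 := by
      rintro rfl
      have : (2 * i * s) ^ 2 * x ^ 2 ≠ 0 := mul_ne_zero (pow_ne_zero 2 hne) (pow_ne_zero 2 hx)
      exact this (by rw [h]; ring)
    refine hD ⟨(2 * i * s) * x / y, ?_⟩
    field_simp
    linear_combination -h
  by_cases hb1 : b 1 = 0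
  · have hb0 : b 0 ≠ 0 := by
      intro h
      exact hD ⟨0, by rw [h, hb1]; ring⟩
    refine key (b 0) c0 hb0 ?_
    rw [← hdisc]
    linear_combination -(c1 * b 0 + c0 * b 1) * e01 + (4 * c0 * b 0) * e02
  · refine key (b 1) c1 hb1 ?_
    rw [← hdisc]
    linear_combination (-4 * c2 * b 1) * e01 + (4 * c1 * b 0) * e12

/-! ### The harmonic homology attached to a line -/

/-- The matrix of `H` (for `ad - bc = 1`) or of its similitude extension, as the symmetric square
of the `2 × 2` matrix with rows `(a, b)` and `(c, d)`. -/
def symSq (a b c d : K) : Matrix (Fin 3) (Fin 3) K :=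
  !![a^2, a*b, b^2; 2*a*c, a*d + b*c, 2*b*d; c^2, c*d, d^2]

lemma symSq_mul (a b c d a' b' c' d' : K) :
    symSq K a b c d * symSq K a' b' c' d' =
      symSq K (a*a' + b*c') (a*b' + b*d') (c*a' + d*c') (c*b' + d*d') := by
  ext i j
  fin_cases i <;> fin_cases j <;> simp [symSq, Matrix.mul_apply, Fin.sum_univ_three] <;> ring

lemma symSq_smul_one (a : K) : symSq K a 0 0 a = (a ^ 2) • (1 : Matrix (Fin 3) (Fin 3) K) := by
  ext i j
  fin_cases i <;> fin_cases j <;> simp [symSq, Matrix.one_apply] <;> ring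

/-- The involutory homology whose axis is the line `b` and whose centre is the pole of `b`,
normalised to fix the vectors on the axis. It is the symmetric square of a traceless `2 × 2`
matrix with square `b1^2 - 4 b0 b2`, divided by that discriminant. -/
def homology (b : Fin 3 → K) : Matrix (Fin 3) (Fin 3) K :=
  (b 1 ^ 2 - 4 * b 0 * b 2)⁻¹ • symSq K (b 1) (-2 * b 0) (2 * b 2) (-b 1)

lemma homology_mul_self (b : Fin 3 → K) (hD : b 1 ^ 2 - 4 * b 0 * b 2 ≠ 0) :
    homology K b * homology K b = 1 := by
  have h : symSq K (b 1) (-2 * b 0) (2 * b 2) (-b 1) * symSq K (b 1) (-2 * b 0) (2 * b 2) (-b 1)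
      = symSq K (b 1 ^ 2 - 4 * b 0 * b 2) 0 0 (b 1 ^ 2 - 4 * b 0 * b 2) := by
    rw [symSq_mul]; congr 1 <;> ring
  rw [homology, smul_mul_smul_comm, h, symSq_smul_one, smul_smul]
  have : (b 1 ^ 2 - 4 * b 0 * b 2)⁻¹ * (b 1 ^ 2 - 4 * b 0 * b 2)⁻¹ *
      (b 1 ^ 2 - 4 * b 0 * b 2) ^ 2 = 1 := by field_simp
  rw [this, one_smul]

lemma homology_conj_mem_Hset (b : Fin 3 → K) (hD : b 1 ^ 2 - 4 * b 0 * b 2 ≠ 0)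
    {M : Matrix (Fin 3) (Fin 3) K} (hM : M ∈ Hset K) :
    homology K b * M * homology K b ∈ Hset K := by
  obtain ⟨x, y, z, t, hdet, rfl⟩ := hM
  change homology K b * symSq K x y z t * homology K b ∈ Hset K
  rw [homology, smul_mul_assoc, smul_mul_smul_comm, symSq_mul, symSq_mul]
  generalize hd : b 1 ^ 2 - 4 * b 0 * b 2 = D at hD
  refine ⟨D⁻¹ * ((b 1 * x + -2 * b 0 * z) * b 1 + (b 1 * y + -2 * b 0 * t) * (2 * b 2)),
    D⁻¹ * ((b 1 * x + -2 * b 0 * z) * (-2 * b 0) + (b 1 * y + -2 * b 0 * t) * (-b 1)),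
    D⁻¹ * ((2 * b 2 * x + -b 1 * z) * b 1 + (2 * b 2 * y + -b 1 * t) * (2 * b 2)),
    D⁻¹ * ((2 * b 2 * x + -b 1 * z) * (-2 * b 0) + (2 * b 2 * y + -b 1 * t) * (-b 1)), ?_, ?_⟩
  · field_simp
    linear_combination (b 1 ^ 2 - 4 * b 0 * b 2) ^ 2 * hdet +
      ((b 1 ^ 2 - 4 * b 0 * b 2) + D) * hd
  · ext i j
    fin_cases i <;> fin_cases j <;> simp [symSq] <;> ring

lemma vecMul_three (v : Fin 3 → K) (M : Matrix (Fin 3) (Fin 3) K) (j : Fin 3) :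
    Matrix.vecMul v M j = v 0 * M 0 j + v 1 * M 1 j + v 2 * M 2 j := by
  simp [Matrix.vecMul, dotProduct, Fin.sum_univ_three]

lemma vecMul_homology_of_onLine (b v : Fin 3 → K) (hD : b 1 ^ 2 - 4 * b 0 * b 2 ≠ 0)
    (hv : v 0 * b 0 + v 1 * b 1 + v 2 * b 2 = 0) :
    Matrix.vecMul v (homology K b) = v := by
  ext j
  rw [vecMul_three]
  fin_cases j <;> simp [homology, symSq] <;> field_simp
  · linear_combination (4 * b 2) * hv
  · linear_combination (-2 * b 1) * hv
  · linear_combination (4 * b 0) * hv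

lemma onLine_of_vecMul_homology (h2 : (2 : K) ≠ 0) (b v : Fin 3 → K)
    (hD : b 1 ^ 2 - 4 * b 0 * b 2 ≠ 0) (hv : Matrix.vecMul v (homology K b) = v) :
    v 0 * b 0 + v 1 * b 1 + v 2 * b 2 = 0 := by
  have h0 := congrFun hv 0
  have h1 := congrFun hv 1
  rw [vecMul_three] at h0 h1
  simp [homology, symSq] at h0 h1
  field_simp at h0 h1
  have e1 : (2 * b 1) * (v 0 * b 0 + v 1 * b 1 + v 2 * b 2) = 0 := by linear_combination -h1
  have e0 : (2 * (2 * b 2)) * (v 0 * b 0 + v 1 * b 1 + v 2 * b 2) = 0 := by linear_combination h0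
  by_contra hne
  have hb1 : b 1 = 0 := by simpa [h2, hne] using e1
  have hb2 : b 2 = 0 := by simpa [h2, hne] using e0
  exact hD (by rw [hb1, hb2]; ring)

/-- The homology is an isometry fixing the points of its axis, so it does not affect pairing
with such a point. -/
lemma perpDot_vecMul_homology (b : Fin 3 → K) (p : Pt K) (w : Fin 3 → K)
    (hD : b 1 ^ 2 - 4 * b 0 * b 2 ≠ 0)
    (hp : p.rep 0 * b 0 + p.rep 1 * b 1 + p.rep 2 * b 2 = 0) :
    perpDot K p (Matrix.vecMul w (homology K b)) = perpDot K p w := by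
  simp only [perpDot, vecMul_three]
  simp [homology, symSq]
  field_simp
  linear_combination (4 * (b 2 * w 2 + b 1 * w 1 + b 0 * w 0)) * hp

lemma Qf_vecMul_inv (M : Matrix (Fin 3) (Fin 3) K) (hM : M ∈ Hset K) (v : Fin 3 → K) :
    Qf K (Matrix.vecMul v M⁻¹) = Qf K v := by
  obtain ⟨x, y, z, t, hdet, rfl⟩ := hM
  have hinv : (symSq K x y z t)⁻¹ = symSq K t (-y) (-z) x := by
    apply Matrix.inv_eq_right_inv
    rw [symSq_mul]
    have : symSq K (x * t + y * -z) (x * -y + y * x) (z * t + t * -z) (z * -y + t * x)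
        = symSq K 1 0 0 1 := by
      congr 1
      · linear_combination hdet
      · ring
      · ring
      · linear_combination hdet
    rw [this, symSq_smul_one]
    simp
  change Qf K (Matrix.vecMul v (symSq K x y z t)⁻¹) = _
  rw [hinv]
  simp only [Qf, vecMul_three]
  simp [symSq]
  linear_combination (v 1 ^ 2 - v 0 * v 2) * (x * t - y * z + 1) * hdet

/-! ### Parity -/

lemma even_ncard_of_involution {α : Type*} [Finite α] (S : Set α) (f : α → α)
    (hmem : ∀ x ∈ S, f x ∈ S) (hinv : ∀ x ∈ S, f (f x) = x) (hne : ∀ x ∈ S, f x ≠ x) :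
    Even S.ncard := by
  have := Fintype.ofFinite α
  rw [Set.ncard_eq_toFinset_card', ← ZMod.natCast_eq_zero_iff_even]
  have h : ∑ _x ∈ S.toFinset, (1 : ZMod 2) = 0 :=
    Finset.sum_involution (fun x _ => f x) (fun _ _ => by decide)
      (fun x hx _ => hne x (by simpa using hx)) (fun x hx => by simpa using hmem x (by simpa using hx))
      (fun x hx => hinv x (by simpa using hx))
  simpa using h

/-- Conjugation by the homology with axis `pr` is a fixed-point-free involution of
`H_{p,r} ∩ C` for every set `C` it preserves. -/
lemma even_inter (h1 : Fintype.card K % 4 = 1) (p r ℓ : Pt K)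
    (hp : Internal K p) (hr : Internal K r)
    (hpl : OnL K p ℓ) (hrl : OnL K r ℓ) (hl : Passant K ℓ)
    (C : Set (Matrix (Fin 3) (Fin 3) K))
    (hC : ∀ M ∈ C, homology K ℓ.rep * M * homology K ℓ.rep ∈ C) :
    Even ((HprSet K p r ∩ C).ncard) := by
  have hD : ℓ.rep 1 ^ 2 - 4 * ℓ.rep 0 * ℓ.rep 2 ≠ 0 := by
    intro h
    exact hl (by rw [lineDisc, h]; exact IsSquare.zero)
  have hττ := homology_mul_self K ℓ.rep hD
  have hτinv : (homology K ℓ.rep)⁻¹ = homology K ℓ.rep := Matrix.inv_eq_right_inv hττ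
  have hrτ := vecMul_homology_of_onLine K ℓ.rep r.rep hD hrl
  have hconj : ∀ M, Matrix.vecMul r.rep (homology K ℓ.rep * M * homology K ℓ.rep)⁻¹ =
      Matrix.vecMul (Matrix.vecMul r.rep M⁻¹) (homology K ℓ.rep) := by
    intro M
    rw [Matrix.mul_inv_rev, Matrix.mul_inv_rev, hτinv, ← Matrix.vecMul_vecMul, hrτ,
      Matrix.vecMul_vecMul]
  refine even_ncard_of_involution _ (fun M => homology K ℓ.rep * M * homology K ℓ.rep) ?_ ?_ ?_
  · rintro M ⟨⟨hMH, hM⟩, hMC⟩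
    refine ⟨⟨homology_conj_mem_Hset K _ hD hMH, ?_⟩, hC M hMC⟩
    rw [hconj, perpDot_vecMul_homology K _ _ _ hD hpl, hM]
  · intro M _
    calc homology K ℓ.rep * (homology K ℓ.rep * M * homology K ℓ.rep) * homology K ℓ.rep
        = (homology K ℓ.rep * homology K ℓ.rep) * M * (homology K ℓ.rep * homology K ℓ.rep) := by
          simp only [mul_assoc]
      _ = M := by rw [hττ, one_mul, mul_one]
  · rintro M ⟨⟨hMH, hM⟩, -⟩ hfix
    -- a fixed `M` would send the internal point `r` to an internal point of the axis
    -- conjugate to `p`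
    have hw := hconj M
    rw [hfix] at hw
    have hwb := onLine_of_vecMul_homology K (two_ne_zero_of_card K h1) _ _ hD hw.symm
    refine conjugate_internal_false K h1 p.rep (Matrix.vecMul r.rep M⁻¹) ℓ.rep hp ?_ hpl hwb hl hM
    rw [Qf_vecMul_inv K M hMH]
    exact hr

lemma trace_homology_conj (b : Fin 3 → K) (hD : b 1 ^ 2 - 4 * b 0 * b 2 ≠ 0)
    (M : Matrix (Fin 3) (Fin 3) K) :
    Matrix.trace (homology K b * M * homology K b) = Matrix.trace M := by
  rw [Matrix.trace_mul_comm, ← mul_assoc, homology_mul_self K b hD, one_mul]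

/-- `q ≡ 1 (mod 4)`, `p ≠ r` internal, line `pr` a passant: `|H_{p,r} ∩ C|` is
even for `C = {1}`, `[4]`, every `[θ]`, and every `[π]`. -/
theorem Hpr_parity_passant_one (h1 : Fintype.card K % 4 = 1) (p r : Pt K)
    (hp : Internal K p) (hr : Internal K r) (hne : p ≠ r)
    (hline : PassantThru K p r) :
    Even ((HprSet K p r ∩ {1}).ncard) ∧
    Even ((HprSet K p r ∩ class4 K).ncard) ∧
    (∀ θ : K, θ ≠ 0 → IsSquare θ → θ ≠ 4 → θ - 4 ≠ 0 → IsSquare (θ - 4) →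
      Even ((HprSet K p r ∩ classOf K θ).ncard)) ∧
    (∀ π : K, π ≠ 0 → IsSquare π → π ≠ 4 → Nonsq K (π - 4) →
      Even ((HprSet K p r ∩ classOf K π).ncard)) := by
  obtain ⟨ℓ, hpl, hrl, hl⟩ := hline
  have hD : ℓ.rep 1 ^ 2 - 4 * ℓ.rep 0 * ℓ.rep 2 ≠ 0 := by
    intro h
    exact hl (by rw [lineDisc, h]; exact IsSquare.zero)
  have hττ := homology_mul_self K ℓ.rep hD
  have hclass : ∀ s : K, Even ((HprSet K p r ∩ classOf K s).ncard) := fun s =>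
    even_inter K h1 p r ℓ hp hr hpl hrl hl _ fun M hM =>
      ⟨homology_conj_mem_Hset K _ hD hM.1, by rw [trace_homology_conj K _ hD]; exact hM.2⟩
  refine ⟨?_, ?_, fun θ _ _ _ _ _ => hclass θ, fun π _ _ _ _ => hclass π⟩
  · refine even_inter K h1 p r ℓ hp hr hpl hrl hl _ ?_
    rintro M rfl
    rw [mul_one, hττ]
    rfl
  · refine even_inter K h1 p r ℓ hp hr hpl hrl hl _ ?_
    rintro M ⟨hMH, hMt, hM1⟩
    refine ⟨homology_conj_mem_Hset K _ hD hMH, by rw [trace_homology_conj K _ hD]; exact hMt, ?_⟩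
    intro h
    apply hM1
    calc M = (homology K ℓ.rep * homology K ℓ.rep) * M * (homology K ℓ.rep * homology K ℓ.rep) := by
          rw [hττ, one_mul, mul_one]
      _ = homology K ℓ.rep * (homology K ℓ.rep * M * homology K ℓ.rep) * homology K ℓ.rep := by
          simp only [mul_assoc]
      _ = 1 := by rw [h, mul_one, hττ]

end ConicPaper
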